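/- Assume (μ,σ,f) satisfies (k-MLLC) for some k ∈ ℕ with k ≥ 3. Then the partial derivative φ⁽ᵏ⁾_{z⁽ᵏ⁻¹⁾} can be expressed as a function of θ_{k−} only: there exists a function g on Θ_{k−1} × ℝ^{m×_k n}, with values in the linear maps from ℝ^{(m×d)×_{k−1} n} to ℝ^{m×_k n}, such that for every θ_k = (t,x,y⁽⁰⁾,z⁽⁰⁾,…,y⁽ᵏ⁾,z⁽ᵏ⁾) ∈ Θ_k the derivative of φ⁽ᵏ⁾ with respect to z⁽ᵏ⁻¹⁾ at θ_k equals g(θ_{k−}), where θ_{k−} := (θ_{k−1}, y⁽ᵏ⁾), i.e. this derivative does not depend on z⁽ᵏ⁾. If L_{σ,z} = 0, the same conclusion already holds for k = 2. -/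

import Mathlib

namespace DecouplingFBSDE

/-! ### Generalized matrices

`Tens n m k` is the space `ℝ^{m×_k n}` of real valued maps on `[m]×[n]^k`;
`TensZ n m d k` is the space `ℝ^{(m×d)×_k n}` of real valued maps on `[m]×[d]×[n]^k`. -/

/-- `ℝ^{m×_k n}`. -/
abbrev Tens (n m k : ℕ) : Type := Fin m → (Fin k → Fin n) → ℝ

/-- `ℝ^{(m×d)×_k n}`. -/
abbrev TensZ (n m d k : ℕ) : Type := Fin m → Fin d → (Fin k → Fin n) → ℝ

/-- `ℝ^{n×d}`, the space of values of `σ`. -/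
abbrev Sig (n d : ℕ) : Type := Fin n → Fin d → ℝ

/-- The space of the variables `(x, y⁽⁰⁾, z⁽⁰⁾)` (identifying `ℝᵐ` with `Tens n m 0`
and `ℝ^{m×d}` with `TensZ n m d 0`). -/
abbrev Arg (n m d : ℕ) : Type := (Fin n → ℝ) × Tens n m 0 × TensZ n m d 0

variable {n m d : ℕ}

/-- Frobenius norm on `Tens n m k`. -/
noncomputable def frobT {k : ℕ} (y : Tens n m k) : ℝ :=
  Real.sqrt (∑ a, ∑ c, (y a c) ^ 2)

/-- Frobenius norm on `TensZ n m d k`. -/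
noncomputable def frobTZ {k : ℕ} (z : TensZ n m d k) : ℝ :=
  Real.sqrt (∑ a, ∑ b, ∑ c, (z a b c) ^ 2)

/-- Frobenius norm on `ℝ^{n×d}`. -/
noncomputable def frobS (s : Sig n d) : ℝ :=
  Real.sqrt (∑ i, ∑ j, (s i j) ^ 2)

/-- `y⁽¹⁾ ∈ ℝ^{m×_1 n}` as an ordinary `m×n` matrix. -/
def mat1 (v : Tens n m 1) : Matrix (Fin m) (Fin n) ℝ :=
  Matrix.of fun a i => v a (fun _ => i)

/-- Operator norm of `y⁽¹⁾ ∈ ℝ^{m×n}` with respect to the Euclidean norms. -/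
noncomputable def opN (v : Tens n m 1) : ℝ :=
  ‖LinearMap.toContinuousLinearMap (Matrix.toEuclideanLin (mat1 v))‖

/-- Standard basis vector of `ℝⁿ`. -/
def eX (c : Fin n) : Fin n → ℝ := Pi.single c 1

/-- Standard basis vector of `ℝᵐ ≅ Tens n m 0`. -/
def eY (a : Fin m) : Tens n m 0 := fun a' _ => if a' = a then 1 else 0

/-- Standard basis element of `ℝ^{m×d} ≅ TensZ n m d 0`. -/
def eZ (a : Fin m) (b : Fin d) : TensZ n m d 0 :=
  fun a' b' _ => if a' = a ∧ b' = b then 1 else 0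

/-- `σ_x(θ)` applied to a direction `v ∈ ℝⁿ`. -/
noncomputable def sx (σ : ℝ → Arg n m d → Sig n d) (t : ℝ) (p : Arg n m d)
    (v : Fin n → ℝ) : Sig n d := fderiv ℝ (σ t) p (v, 0, 0)

/-- `σ_y(θ)` applied to a direction `w ∈ ℝᵐ`. -/
noncomputable def sy (σ : ℝ → Arg n m d → Sig n d) (t : ℝ) (p : Arg n m d)
    (w : Tens n m 0) : Sig n d := fderiv ℝ (σ t) p (0, w, 0)

/-- `σ_z(θ)` applied to a direction `ζ ∈ ℝ^{m×d}`. -/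
noncomputable def sz (σ : ℝ → Arg n m d → Sig n d) (t : ℝ) (p : Arg n m d)
    (ζ : TensZ n m d 0) : Sig n d := fderiv ℝ (σ t) p (0, 0, ζ)

/-- `μ_x(θ)` applied to a direction `v ∈ ℝⁿ`. -/
noncomputable def mx (μ : ℝ → Arg n m d → (Fin n → ℝ)) (t : ℝ) (p : Arg n m d)
    (v : Fin n → ℝ) : Fin n → ℝ := fderiv ℝ (μ t) p (v, 0, 0)

/-- `μ_y(θ)` applied to a direction `w ∈ ℝᵐ`. -/
noncomputable def my (μ : ℝ → Arg n m d → (Fin n → ℝ)) (t : ℝ) (p : Arg n m d)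
    (w : Tens n m 0) : Fin n → ℝ := fderiv ℝ (μ t) p (0, w, 0)

/-- `μ_z(θ)` applied to a direction `ζ ∈ ℝ^{m×d}`. -/
noncomputable def mz (μ : ℝ → Arg n m d → (Fin n → ℝ)) (t : ℝ) (p : Arg n m d)
    (ζ : TensZ n m d 0) : Fin n → ℝ := fderiv ℝ (μ t) p (0, 0, ζ)

/-- The generalized matrix `Id_{m×d} − y⁽¹⁾σ_z(θ) ∈ ℝ^{(m×d)×(m×d)}`, viewed as an
`(m·d)×(m·d)` matrix. -/
noncomputable def Gmat (σ : ℝ → Arg n m d → Sig n d) (t : ℝ) (p : Arg n m d)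
    (y1 : Tens n m 1) : Matrix (Fin m × Fin d) (Fin m × Fin d) ℝ :=
  1 - Matrix.of fun ab pq => ∑ i, mat1 y1 ab.1 i * sz σ t p (eZ pq.1 pq.2) i ab.2

/-- `y⁽¹⁾σ_x(θ) + y⁽¹⁾σ_y(θ)y⁽¹⁾ + z⁽¹⁾ ∈ ℝ^{(m×d)×n}`. -/
noncomputable def Rh (σ : ℝ → Arg n m d → Sig n d) (t : ℝ) (p : Arg n m d)
    (y1 : Tens n m 1) (z1 : TensZ n m d 1) : TensZ n m d 1 :=
  fun a b c =>
    (∑ i, mat1 y1 a i * sx σ t p (eX (c 0)) i b)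
    + (∑ j, (∑ i, mat1 y1 a i * sy σ t p (eY j) i b) * mat1 y1 j (c 0))
    + z1 a b c

/-- `h⁽¹⁾(θ₁) := (Id_{m×d} − y⁽¹⁾σ_z(θ))⁻¹ (y⁽¹⁾σ_x(θ) + y⁽¹⁾σ_y(θ)y⁽¹⁾ + z⁽¹⁾)`. -/
noncomputable def h1 (σ : ℝ → Arg n m d → Sig n d) (t : ℝ) (p : Arg n m d)
    (y1 : Tens n m 1) (z1 : TensZ n m d 1) : TensZ n m d 1 :=
  fun a b c =>
    ∑ pq : Fin m × Fin d, (Gmat σ t p y1)⁻¹ (a, b) pq * Rh σ t p y1 z1 pq.1 pq.2 c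

/-- The `n×n` matrix `σ⁽ᵇ⁾_x(θ) + σ⁽ᵇ⁾_y(θ)y⁽¹⁾ + σ⁽ᵇ⁾_z(θ)h⁽¹⁾(θ₁)` for the `b`-th
column of `σ`. -/
noncomputable def Bmat (σ : ℝ → Arg n m d → Sig n d) (t : ℝ) (p : Arg n m d)
    (y1 : Tens n m 1) (z1 : TensZ n m d 1) (b : Fin d) : Fin n → Fin n → ℝ :=
  fun i c =>
    sx σ t p (eX c) i b
    + (∑ a, sy σ t p (eY a) i b * mat1 y1 a c)
    + ∑ pq : Fin m × Fin d,
        sz σ t p (eZ pq.1 pq.2) i b * h1 σ t p y1 z1 pq.1 pq.2 (fun _ => c)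

/-- The `n×n` matrix `μ_x(θ) + μ_y(θ)y⁽¹⁾ + μ_z(θ)h⁽¹⁾(θ₁)`. -/
noncomputable def Amat (μ : ℝ → Arg n m d → (Fin n → ℝ)) (σ : ℝ → Arg n m d → Sig n d)
    (t : ℝ) (p : Arg n m d) (y1 : Tens n m 1) (z1 : TensZ n m d 1) :
    Fin n → Fin n → ℝ :=
  fun i c =>
    mx μ t p (eX c) i
    + (∑ a, my μ t p (eY a) i * mat1 y1 a c)
    + ∑ pq : Fin m × Fin d,
        mz μ t p (eZ pq.1 pq.2) i * h1 σ t p y1 z1 pq.1 pq.2 (fun _ => c)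

/-- Product of a generalized matrix `y ∈ ℝ^{m×_{k+1} n}` with an `n×n` matrix `A`,
contracting the trailing index of `y` with the first index of `A`. -/
def mulRight {k : ℕ} (y : Tens n m (k + 1)) (A : Fin n → Fin n → ℝ) :
    Tens n m (k + 1) :=
  fun a c => ∑ j, y a (Fin.snoc (Fin.init c) j) * A j (c (Fin.last k))

/-- `h⁽ᵏ⁾(θ_k)` for `k ≥ 2`:
`h⁽ᵏ'ʲ⁾(θ_k) = z⁽ᵏ'ʲ⁾ + y⁽ᵏ⁾(σ⁽ʲ⁾_x(θ) + σ⁽ʲ⁾_y(θ)y⁽¹⁾ + σ⁽ʲ⁾_z(θ)h⁽¹⁾(θ₁))`. -/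
noncomputable def hK (σ : ℝ → Arg n m d → Sig n d) (t : ℝ) (p : Arg n m d)
    (y1 : Tens n m 1) (z1 : TensZ n m d 1) {k : ℕ}
    (yk : Tens n m (k + 1)) (zk : TensZ n m d (k + 1)) : TensZ n m d (k + 1) :=
  fun a b c => zk a b c + mulRight yk (Bmat σ t p y1 z1 b) a c

/-- `h⁽ᵏ⁾` for every `k ≥ 1`: `h⁽¹⁾` for `k = 1` and the affine formula for `k ≥ 2`. -/
noncomputable def hGen (σ : ℝ → Arg n m d → Sig n d) (t : ℝ) (p : Arg n m d)
    (y1 : Tens n m 1) (z1 : TensZ n m d 1) :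
    {k : ℕ} → Tens n m (k + 1) → TensZ n m d (k + 1) → TensZ n m d (k + 1)
  | 0, yk, zk => h1 σ t p yk zk
  | _ + 1, yk, zk => hK σ t p y1 z1 yk zk

/-- The state space `(x, y⁽⁰⁾, z⁽⁰⁾, …, y⁽ⁱ⁾, z⁽ⁱ⁾)` of the spatial variables
of `Θ_i`. -/
abbrev EE (n m d i : ℕ) : Type :=
  (Fin n → ℝ) × ((j : Fin (i + 1)) → Tens n m j) × ((j : Fin (i + 1)) → TensZ n m d j)

/-- `φ_x(θ) ∈ ℝ^{m×_i n×n}`, reassembled as an element of `ℝ^{m×_{i+1} n}` (the trailing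
index runs through the `x`-directions). -/
def appX {i : ℕ} (L : (Fin n → ℝ) → Tens n m i) : Tens n m (i + 1) :=
  fun a c => L (eX (c (Fin.last i))) a (Fin.init c)

/-- Product `φ_{y⁽ʲ⁾}(θ)·y`, applying the linear map `L` slice-wise in the trailing
index of `y ∈ ℝ^{m×_{j+1} n}`. -/
def appY {j i : ℕ} (L : Tens n m j → Tens n m i) (y : Tens n m (j + 1)) :
    Tens n m (i + 1) :=
  fun a c => L (fun a' c' => y a' (Fin.snoc c' (c (Fin.last i)))) a (Fin.init c)

/-- Product `φ_{z⁽ʲ⁾}(θ)·z`, applying the linear map `L` slice-wise in the trailing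
index of `z ∈ ℝ^{(m×d)×_{j+1} n}`. -/
def appZ {j i : ℕ} (L : TensZ n m d j → Tens n m i) (z : TensZ n m d (j + 1)) :
    Tens n m (i + 1) :=
  fun a c => L (fun a' b' c' => z a' b' (Fin.snoc c' (c (Fin.last i)))) a (Fin.init c)

/-- Partial derivative in the direction of `x`, extracted from a total derivative. -/
noncomputable def Dx {i : ℕ} (D : EE n m d i →L[ℝ] Tens n m i) :
    (Fin n → ℝ) → Tens n m i :=
  fun v => D (v, 0, 0)

/-- Partial derivative in the direction of `y⁽ʲ⁾`, extracted from a total derivative. -/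
noncomputable def Dyp {i : ℕ} (D : EE n m d i →L[ℝ] Tens n m i) (j : Fin (i + 1)) :
    Tens n m j → Tens n m i :=
  fun w => D (0, Pi.single j w, 0)

/-- Partial derivative in the direction of `z⁽ʲ⁾`, extracted from a total derivative. -/
noncomputable def Dzp {i : ℕ} (D : EE n m d i →L[ℝ] Tens n m i) (j : Fin (i + 1)) :
    TensZ n m d j → Tens n m i :=
  fun w => D (0, 0, Pi.single j w)

/-- The type of the function `φ⁽ⁱ⁾`. -/
abbrev PhiFun (n m d i : ℕ) : Type := ℝ → EE n m d i → Tens n m i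

/-- The right hand side of the recursion defining `φ⁽ⁱ⁺¹⁾` from the derivative `D`
of `φ⁽ⁱ⁾`:
`φ⁽ⁱ⁺¹⁾ = φ⁽ⁱ⁾_x + Σ_j (φ⁽ⁱ⁾_{y⁽ʲ⁾}y⁽ʲ⁺¹⁾ + φ⁽ⁱ⁾_{z⁽ʲ⁾}h⁽ʲ⁺¹⁾)
         − y⁽ⁱ⁺¹⁾(μ_x + μ_y y⁽¹⁾ + μ_z h⁽¹⁾) − Σ_b z⁽ⁱ⁺¹'ᵇ⁾(σ⁽ᵇ⁾_x + σ⁽ᵇ⁾_y y⁽¹⁾ + σ⁽ᵇ⁾_z h⁽¹⁾)`. -/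
noncomputable def phiStep {i : ℕ} (μ : ℝ → Arg n m d → (Fin n → ℝ))
    (σ : ℝ → Arg n m d → Sig n d) (t : ℝ) (D : EE n m d i →L[ℝ] Tens n m i)
    (x : Fin n → ℝ) (Y : (j : Fin (i + 2)) → Tens n m j)
    (Z : (j : Fin (i + 2)) → TensZ n m d j) : Tens n m (i + 1) :=
  (appX (Dx D)
      + ∑ j : Fin (i + 1),
          (appY (Dyp D j) (Y j.succ)
            + appZ (Dzp D j)
                (hGen σ t (x, Y ⟨0, by omega⟩, Z ⟨0, by omega⟩)
                  (Y ⟨1, by omega⟩) (Z ⟨1, by omega⟩) (Y j.succ) (Z j.succ))))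
    - mulRight (Y (Fin.last (i + 1)))
        (Amat μ σ t (x, Y ⟨0, by omega⟩, Z ⟨0, by omega⟩)
          (Y ⟨1, by omega⟩) (Z ⟨1, by omega⟩))
    - ∑ b : Fin d,
        mulRight (fun a c => Z (Fin.last (i + 1)) a b c)
          (Bmat σ t (x, Y ⟨0, by omega⟩, Z ⟨0, by omega⟩)
            (Y ⟨1, by omega⟩) (Z ⟨1, by omega⟩) b)

/-- The family `(φ⁽⁰⁾, …, φ⁽ᵏ⁾)` satisfies the defining recursion of the generators
of the backward equations for the spatial derivatives of the decoupling field: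
`φ⁽⁰⁾ = f` and, at every point of `Θ_{i+1}`, `φ⁽ⁱ⁾` is (classically) differentiable
in `(x, y⁽⁰⁾, z⁽⁰⁾, …, y⁽ⁱ⁾, z⁽ⁱ⁾)` and `φ⁽ⁱ⁺¹⁾` is given by the recursion formula. -/
structure IsPhiChain (n m d k : ℕ) (T Lz : ℝ)
    (μ : ℝ → Arg n m d → (Fin n → ℝ)) (σ : ℝ → Arg n m d → Sig n d)
    (f : ℝ → Arg n m d → Tens n m 0)
    (φ : (i : ℕ) → PhiFun n m d i) : Prop where
  base : ∀ t ∈ Set.Icc (0:ℝ) T, ∀ p : EE n m d 0,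
    φ 0 t p = f t (p.1, p.2.1 ⟨0, by omega⟩, p.2.2 ⟨0, by omega⟩)
  step : ∀ i : ℕ, i + 1 ≤ k → ∀ t ∈ Set.Icc (0:ℝ) T,
    ∀ (x : Fin n → ℝ) (Y : (j : Fin (i + 2)) → Tens n m j)
      (Z : (j : Fin (i + 2)) → TensZ n m d j),
      Lz * opN (Y ⟨1, by omega⟩) < 1 →
      ∃ D : EE n m d i →L[ℝ] Tens n m i,
        HasFDerivAt (φ i t) D (x, fun j => Y j.castSucc, fun j => Z j.castSucc) ∧
        φ (i + 1) t (x, Y, Z) = phiStep μ σ t D x Y Z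

/-- The modified local Lipschitz conditions `(k-MLLC)` for `(μ,σ,f)`:
`μ, σ, f` are deterministic, `k` times classically differentiable in `(x,y,z)`,
they and their derivatives up to order `k` are Lipschitz continuous in `(x,y,z)`
on sets with bounded `z`-component (uniformly in `t ∈ [0,T]`),
`‖μ(·,0,0,0)‖_∞, ‖f(·,0,0,0)‖_∞, ‖σ(·,·,·,0)‖_∞ < ∞`, and `σ` is Lipschitz
continuous in `z` with constant `Lz` with respect to Frobenius norms. -/
structure MLLC (n m d k : ℕ) (T : ℝ)
    (μ : ℝ → Arg n m d → (Fin n → ℝ)) (σ : ℝ → Arg n m d → Sig n d)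
    (f : ℝ → Arg n m d → Tens n m 0) (Lz : ℝ) : Prop where
  smooth_mu : ∀ t ∈ Set.Icc (0:ℝ) T, ContDiff ℝ (k : ℕ∞) (μ t)
  smooth_sigma : ∀ t ∈ Set.Icc (0:ℝ) T, ContDiff ℝ (k : ℕ∞) (σ t)
  smooth_f : ∀ t ∈ Set.Icc (0:ℝ) T, ContDiff ℝ (k : ℕ∞) (f t)
  lipschitz_on_bounded : ∀ R : ℝ, ∃ L : NNReal, ∀ t ∈ Set.Icc (0:ℝ) T, ∀ j : ℕ, j ≤ k →
    LipschitzOnWith L (iteratedFDeriv ℝ j (μ t)) {p : Arg n m d | frobTZ p.2.2 ≤ R} ∧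
    LipschitzOnWith L (iteratedFDeriv ℝ j (σ t)) {p : Arg n m d | frobTZ p.2.2 ≤ R} ∧
    LipschitzOnWith L (iteratedFDeriv ℝ j (f t)) {p : Arg n m d | frobTZ p.2.2 ≤ R}
  bounded_at_zero : ∃ C : ℝ, ∀ t ∈ Set.Icc (0:ℝ) T,
    ‖μ t 0‖ ≤ C ∧ ‖f t 0‖ ≤ C ∧ ∀ (x : Fin n → ℝ) (y : Tens n m 0), ‖σ t (x, y, 0)‖ ≤ C
  lz_nonneg : 0 ≤ Lz
  lz_lipschitz : ∀ t ∈ Set.Icc (0:ℝ) T, ∀ (x : Fin n → ℝ) (y : Tens n m 0)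
    (z z' : TensZ n m d 0),
    frobS (σ t (x, y, z) - σ t (x, y, z')) ≤ Lz * frobTZ (z - z')


/-- Affine maps, via preservation of affine combinations. -/
def IsAff {V W : Type*} [AddCommGroup V] [Module ℝ V] [AddCommGroup W] [Module ℝ W]
    (F : V → W) : Prop :=
  ∀ (s : ℝ) (a b : V), F ((1 - s) • a + s • b) = (1 - s) • F a + s • F b

section Aff
variable {V W U : Type*} [AddCommGroup V] [Module ℝ V] [AddCommGroup W] [Module ℝ W]
  [AddCommGroup U] [Module ℝ U]

lemma IsAff.const (c : W) : IsAff (fun _ : V => c) := by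
  intro s a b
  module

lemma IsAff.id : IsAff (fun v : V => v) := fun _ _ _ => rfl

lemma IsAff.add {F G : V → W} (hF : IsAff F) (hG : IsAff G) : IsAff (fun v => F v + G v) := by
  intro s a b
  simp only [hF s a b, hG s a b]
  module

lemma IsAff.sub {F G : V → W} (hF : IsAff F) (hG : IsAff G) : IsAff (fun v => F v - G v) := by
  intro s a b
  simp only [hF s a b, hG s a b]
  module

lemma IsAff.sum {ι : Type*} (S : Finset ι) {F : ι → V → W} (hF : ∀ i, IsAff (F i)) :
    IsAff (fun v => ∑ i ∈ S, F i v) := by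
  intro s a b
  simp only [hF _ s a b, Finset.sum_add_distrib, Finset.smul_sum]

lemma IsAff.const_mul {F : V → ℝ} (c : ℝ) (hF : IsAff F) : IsAff (fun v => c * F v) := by
  intro s a b
  simp only [hF s a b, smul_eq_mul]
  ring

lemma IsAff.mul_const {F : V → ℝ} (c : ℝ) (hF : IsAff F) : IsAff (fun v => F v * c) := by
  intro s a b
  simp only [hF s a b, smul_eq_mul]
  ring

lemma IsAff.pi {ι : Type*} {E : ι → Type*} [∀ i, AddCommGroup (E i)] [∀ i, Module ℝ (E i)]
    {F : V → (i : ι) → E i} (hF : ∀ i, IsAff (fun v => F v i)) : IsAff F := by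
  intro s a b
  funext i
  exact hF i s a b

lemma IsAff.apply {ι : Type*} {E : ι → Type*} [∀ i, AddCommGroup (E i)] [∀ i, Module ℝ (E i)]
    {F : V → (i : ι) → E i} (hF : IsAff F) (i : ι) : IsAff (fun v => F v i) := by
  intro s a b
  exact congrFun (hF s a b) i

lemma IsAff.comp {F : W → U} {G : V → W} (hF : IsAff F) (hG : IsAff G) :
    IsAff (fun v => F (G v)) := by
  intro s a b
  simp only [hG s a b, hF s]

end Aff

lemma IsAff.exists_clm {V W : Type*} [NormedAddCommGroup V] [NormedSpace ℝ V]
    [FiniteDimensional ℝ V] [NormedAddCommGroup W] [NormedSpace ℝ W]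
    {F : V → W} (hF : IsAff F) : ∃ L : V →L[ℝ] W, ∀ v, F v = F 0 + L v := by
  have hs : ∀ (c : ℝ) (v : V), F (c • v) - F 0 = c • (F v - F 0) := by
    intro c v
    have := hF c 0 v
    simp only [smul_zero, zero_add] at this
    rw [this]; module
  let L : V →ₗ[ℝ] W :=
    { toFun := fun v => F v - F 0
      map_add' := by
        intro a b
        have h := hF (1/2) ((2:ℝ) • a) ((2:ℝ) • b)
        have h1 := hs 2 a
        have h2 := hs 2 b
        have e : (1 - (1/2:ℝ)) • (2:ℝ) • a + (1/2:ℝ) • (2:ℝ) • b = a + b := by module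
        rw [e] at h
        rw [sub_eq_iff_eq_add] at h1 h2
        rw [h, h1, h2]; module
      map_smul' := by
        intro c v
        exact hs c v }
  refine ⟨LinearMap.toContinuousLinearMap L, fun v => ?_⟩
  simp [L]

lemma IsAff.differentiable {V W : Type*} [NormedAddCommGroup V] [NormedSpace ℝ V]
    [FiniteDimensional ℝ V] [NormedAddCommGroup W] [NormedSpace ℝ W]
    {F : V → W} (hF : IsAff F) : Differentiable ℝ F := by
  obtain ⟨L, hL⟩ := hF.exists_clm
  have : F = fun v => F 0 + L v := funext hL
  rw [this]
  fun_prop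

lemma IsAff.deriv_apply {V W : Type*} [NormedAddCommGroup V] [NormedSpace ℝ V]
    [FiniteDimensional ℝ V] [NormedAddCommGroup W] [NormedSpace ℝ W]
    {F : V → W} (hF : IsAff F) {D : V →L[ℝ] W} {a : V} (hD : HasFDerivAt F D a) (v : V) :
    D v = F v - F 0 := by
  obtain ⟨L, hL⟩ := hF.exists_clm
  have h2 : HasFDerivAt F L a := by
    have : F = fun v => F 0 + L v := funext hL
    rw [this]
    exact L.hasFDerivAt.const_add _
  rw [hD.unique h2, hL v]; simp

lemma sz_zero {T : ℝ} {k : ℕ} {μ : ℝ → Arg n m d → (Fin n → ℝ)} {σ : ℝ → Arg n m d → Sig n d}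
    {f : ℝ → Arg n m d → Tens n m 0} (h : MLLC n m d (k + 1) T μ σ f 0) {t : ℝ}
    (ht : t ∈ Set.Icc (0:ℝ) T) (p : Arg n m d) (ζ : TensZ n m d 0) : sz σ t p ζ = 0 := by
  have hc : ∀ s : ℝ, σ t (p + s • ((0, 0, ζ) : Arg n m d)) = σ t p := by
    intro s
    have h1 := h.lz_lipschitz t ht p.1 p.2.1 (p.2.2 + s • ζ) p.2.2
    have e : p + s • ((0, 0, ζ) : Arg n m d) = (p.1, p.2.1, p.2.2 + s • ζ) := by
      ext <;> simp
    rw [e]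
    have e2 : p = (p.1, p.2.1, p.2.2) := rfl
    rw [zero_mul, frobS, Real.sqrt_le_iff] at h1
    have h2 := h1.2
    norm_num at h2
    have h3 : ∑ i, ∑ j, (σ t (p.1, p.2.1, p.2.2 + s • ζ) i j - σ t p i j) ^ 2 = 0 :=
      le_antisymm h2 (Finset.sum_nonneg fun i _ => Finset.sum_nonneg fun j _ => sq_nonneg _)
    funext i j
    rw [Finset.sum_eq_zero_iff_of_nonneg
      (fun i _ => Finset.sum_nonneg fun j _ => sq_nonneg _)] at h3
    have h4 := h3 i (Finset.mem_univ _)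
    rw [Finset.sum_eq_zero_iff_of_nonneg (fun j _ => sq_nonneg _)] at h4
    have h5 := h4 j (Finset.mem_univ _)
    exact sub_eq_zero.mp (pow_eq_zero_iff (two_ne_zero) |>.mp h5)
  have hd : DifferentiableAt ℝ (σ t) p :=
    ((h.smooth_sigma t ht).differentiable (by simp)) p
  rw [sz, ← hd.lineDeriv_eq_fderiv, lineDeriv]
  simp only [hc, deriv_const]

section PhiAff
variable {V : Type*} [AddCommGroup V] [Module ℝ V]

lemma aff_h1 (σ : ℝ → Arg n m d → Sig n d) (t : ℝ) (p : Arg n m d) (y1 : Tens n m 1)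
    {z : V → TensZ n m d 1} (hz : IsAff z) : IsAff (fun w => h1 σ t p y1 (z w)) := by
  refine IsAff.pi fun a => IsAff.pi fun b => IsAff.pi fun c => ?_
  unfold h1 Rh
  refine IsAff.sum _ fun pq => IsAff.const_mul _ (IsAff.add (IsAff.const _) ?_)
  exact ((hz.apply _).apply _).apply _

lemma aff_Bmat (σ : ℝ → Arg n m d → Sig n d) (t : ℝ) (p : Arg n m d) (y1 : Tens n m 1)
    {z : V → TensZ n m d 1} (hz : IsAff z) (b : Fin d) :
    IsAff (fun w => Bmat σ t p y1 (z w) b) := by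
  refine IsAff.pi fun i => IsAff.pi fun c => ?_
  unfold Bmat
  refine IsAff.add (IsAff.const _) (IsAff.sum _ fun pq => IsAff.const_mul _ ?_)
  exact (((aff_h1 σ t p y1 hz).apply _).apply _).apply _

lemma aff_Amat (μ : ℝ → Arg n m d → (Fin n → ℝ)) (σ : ℝ → Arg n m d → Sig n d) (t : ℝ)
    (p : Arg n m d) (y1 : Tens n m 1)
    {z : V → TensZ n m d 1} (hz : IsAff z) :
    IsAff (fun w => Amat μ σ t p y1 (z w)) := by
  refine IsAff.pi fun i => IsAff.pi fun c => ?_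
  unfold Amat
  refine IsAff.add (IsAff.const _) (IsAff.sum _ fun pq => IsAff.const_mul _ ?_)
  exact (((aff_h1 σ t p y1 hz).apply _).apply _).apply _

lemma aff_mulRight {k : ℕ} (y : Tens n m (k + 1)) {A : V → Fin n → Fin n → ℝ} (hA : IsAff A) :
    IsAff (fun w => mulRight y (A w)) := by
  refine IsAff.pi fun i => IsAff.pi fun c => ?_
  unfold mulRight
  exact IsAff.sum _ fun j => IsAff.const_mul _ ((hA.apply _).apply _)

lemma aff_mulRight' {k : ℕ} {y : V → Tens n m (k + 1)} (A : Fin n → Fin n → ℝ) (hy : IsAff y) :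
    IsAff (fun w => mulRight (y w) A) := by
  refine IsAff.pi fun i => IsAff.pi fun c => ?_
  unfold mulRight
  exact IsAff.sum _ fun j => IsAff.mul_const _ ((hy.apply _).apply _)

lemma aff_hGen (σ : ℝ → Arg n m d → Sig n d) (t : ℝ) (p : Arg n m d) (y1 : Tens n m 1)
    {z : V → TensZ n m d 1} (hz : IsAff z) {k : ℕ} (yk : Tens n m (k + 1))
    {zk : V → TensZ n m d (k + 1)} (hzk : IsAff zk) :
    IsAff (fun w => hGen σ t p y1 (z w) yk (zk w)) := by
  cases k with
  | zero => exact aff_h1 σ t p yk hzk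
  | succ k =>
    refine IsAff.pi fun a => IsAff.pi fun b => IsAff.pi fun c => ?_
    show IsAff (fun w => zk w a b c + mulRight yk (Bmat σ t p y1 (z w) b) a c)
    exact IsAff.add (((hzk.apply _).apply _).apply _)
      (((aff_mulRight yk (aff_Bmat σ t p y1 hz b)).apply _).apply _)

lemma aff_appZ {i : ℕ} (D : EE n m d i →L[ℝ] Tens n m i) (j : Fin (i + 1))
    {H : V → TensZ n m d (j + 1)} (hH : IsAff H) : IsAff (fun w => appZ (Dzp D j) (H w)) := by
  intro s a b
  funext e c
  have hv : ((0, 0, Pi.single j (fun a' b' c' =>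
        H ((1 - s) • a + s • b) a' b' (Fin.snoc c' (c (Fin.last i))))) : EE n m d i) =
      (1 - s) • ((0, 0, Pi.single j (fun a' b' c' =>
        H a a' b' (Fin.snoc c' (c (Fin.last i))))) : EE n m d i) +
      s • ((0, 0, Pi.single j (fun a' b' c' =>
        H b a' b' (Fin.snoc c' (c (Fin.last i))))) : EE n m d i) := by
    simp only [hH s a b, Prod.smul_mk, Prod.mk_add_mk, smul_zero, add_zero, ← Pi.single_smul,
      ← Pi.single_add]
    rfl
  have h2 := congrArg D hv
  rw [map_add, map_smul, map_smul] at h2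
  exact congrFun (congrFun h2 e) (Fin.init c)

lemma aff_update {k : ℕ} (Z : (j : Fin k) → TensZ n m d j) (q j : Fin k) :
    IsAff (fun w : TensZ n m d q => Function.update Z q w j) := by
  by_cases h : j = q
  · subst h
    simpa using IsAff.id
  · simpa [Function.update_of_ne h] using IsAff.const _

end PhiAff

lemma Bmat_indep {σ : ℝ → Arg n m d → Sig n d} {t : ℝ} {p : Arg n m d} {y1 : Tens n m 1}
    (h : ∀ ζ, sz σ t p ζ = 0) (z1 z1' : TensZ n m d 1) (b : Fin d) :
    Bmat σ t p y1 z1 b = Bmat σ t p y1 z1' b := by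
  unfold Bmat
  simp [h]

/-- The part of the step without the derivative terms. -/
lemma phiStep_aff {i : ℕ} (μ : ℝ → Arg n m d → (Fin n → ℝ))
    (σ : ℝ → Arg n m d → Sig n d) (t : ℝ) (D : EE n m d i →L[ℝ] Tens n m i)
    (x : Fin n → ℝ) (Y : (j : Fin (i + 2)) → Tens n m j)
    (Z : (j : Fin (i + 2)) → TensZ n m d j)
    (hB : 1 ≤ i ∨ ∀ p ζ, sz σ t p ζ = 0) :
    IsAff (fun w : TensZ n m d (i + 1) =>
      phiStep μ σ t D x Y (Function.update Z (Fin.last (i + 1)) w)) := by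
  unfold phiStep
  have h0 : ∀ w : TensZ n m d (i + 1),
      Function.update Z (Fin.last (i + 1)) w ⟨0, by omega⟩ = Z ⟨0, by omega⟩ := by
    intro w
    exact Function.update_of_ne (by simp [Fin.ext_iff]) _ _
  have hu := fun j => aff_update Z (Fin.last (i + 1)) j
  have hBc : ∀ (w : TensZ n m d (i + 1)) (b : Fin d),
      Bmat σ t (x, Y ⟨0, by omega⟩, Z ⟨0, by omega⟩) (Y ⟨1, by omega⟩)
        (Function.update Z (Fin.last (i + 1)) w ⟨1, by omega⟩) b =
      Bmat σ t (x, Y ⟨0, by omega⟩, Z ⟨0, by omega⟩) (Y ⟨1, by omega⟩) (Z ⟨1, by omega⟩) b := by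
    intro w b
    rcases hB with h | h
    · rw [Function.update_of_ne]
      simp [Fin.ext_iff]; omega
    · exact Bmat_indep (h _) _ _ _
  simp only [h0, hBc]
  refine IsAff.sub (IsAff.sub (IsAff.add (IsAff.const _) (IsAff.sum _ fun j =>
    IsAff.add (IsAff.const _) (aff_appZ D j ?_))) (aff_mulRight _ ?_))
    (IsAff.sum _ fun b => aff_mulRight' _ ?_)
  · exact aff_hGen σ t _ _ (hu ⟨1, by omega⟩) _ (hu j.succ)
  · exact aff_Amat μ σ t _ _ (hu ⟨1, by omega⟩)
  · exact IsAff.pi fun a => IsAff.pi fun c => (((hu (Fin.last (i + 1))).apply a).apply b).apply c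

lemma diff_appZ {V : Type*} [NormedAddCommGroup V] [NormedSpace ℝ V] {i : ℕ}
    {D : V → EE n m d i →L[ℝ] Tens n m i} (hD : Differentiable ℝ D) (j : Fin (i + 1))
    {H : V → TensZ n m d (j + 1)} (hH : Differentiable ℝ H) :
    Differentiable ℝ (fun w => appZ (Dzp (D w) j) (H w)) := by
  rw [differentiable_pi]; intro a
  rw [differentiable_pi]; intro c
  unfold appZ Dzp
  have hs : Differentiable ℝ (fun w => ((0, 0, Pi.single j
      (fun a' b' c' => H w a' b' (Fin.snoc c' (c (Fin.last i))))) : EE n m d i)) := by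
    refine (differentiable_const _).prodMk ((differentiable_const _).prodMk ?_)
    refine (ContinuousLinearMap.single ℝ
      (fun j : Fin (i + 1) => TensZ n m d j) j).differentiable.comp ?_
    rw [differentiable_pi]; intro a'
    rw [differentiable_pi]; intro b'
    rw [differentiable_pi]; intro c'
    fun_prop
  have := hD.clm_apply hs
  exact differentiable_pi.1 (differentiable_pi.1 this a) _

lemma phiStep_diff {i : ℕ} (μ : ℝ → Arg n m d → (Fin n → ℝ))
    (σ : ℝ → Arg n m d → Sig n d) (t : ℝ)
    (x : Fin n → ℝ) (Y : (j : Fin (i + 2)) → Tens n m j)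
    (Z : (j : Fin (i + 2)) → TensZ n m d j) (q : Fin (i + 2)) (hq0 : q ≠ ⟨0, by omega⟩)
    (hq : q ≠ Fin.last (i + 1)) (D : TensZ n m d q → EE n m d i →L[ℝ] Tens n m i)
    (hD : Differentiable ℝ D) :
    Differentiable ℝ (fun w : TensZ n m d q =>
      phiStep μ σ t (D w) x Y (Function.update Z q w)) := by
  unfold phiStep
  have h0 : ∀ w : TensZ n m d q,
      Function.update Z q w ⟨0, by omega⟩ = Z ⟨0, by omega⟩ := by
    intro w
    exact Function.update_of_ne hq0.symm _ _
  have hl : ∀ w : TensZ n m d q,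
      Function.update Z q w (Fin.last (i + 1)) = Z (Fin.last (i + 1)) := by
    intro w
    exact Function.update_of_ne hq.symm _ _
  have hu := fun j => aff_update Z q j
  simp only [h0, hl]
  have hDv : ∀ (v : EE n m d i) a c, Differentiable ℝ (fun w => D w v a c) := fun v a c =>
    differentiable_pi.1 (differentiable_pi.1 (hD.clm_apply (differentiable_const v)) a) c
  refine Differentiable.sub (Differentiable.sub (Differentiable.add ?_ (Differentiable.fun_sum
    fun j _ => Differentiable.add ?_ (diff_appZ hD j ?_))) ?_) (Differentiable.fun_sum fun b _ => ?_)
  · rw [differentiable_pi]; intro a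
    rw [differentiable_pi]; intro c
    exact hDv _ _ _
  · rw [differentiable_pi]; intro a
    rw [differentiable_pi]; intro c
    exact hDv _ _ _
  · exact (aff_hGen σ t _ _ (hu ⟨1, by omega⟩) _ (hu j.succ)).differentiable
  · exact (aff_mulRight _ (aff_Amat μ σ t _ _ (hu ⟨1, by omega⟩))).differentiable
  · exact (aff_mulRight _ (aff_Bmat σ t _ _ (hu ⟨1, by omega⟩) b)).differentiable

lemma continuous_opN : Continuous (opN : Tens n m 1 → ℝ) := by
  let M : Tens n m 1 →ₗ[ℝ] (EuclideanSpace ℝ (Fin n) →L[ℝ] EuclideanSpace ℝ (Fin m)) :=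
    { toFun := fun v => LinearMap.toContinuousLinearMap (Matrix.toEuclideanLin (mat1 v))
      map_add' := by
        intro a b
        rw [← map_add, ← map_add]
        rfl
      map_smul' := by
        intro c b
        rw [← map_smul, ← map_smul]
        rfl }
  exact (LinearMap.continuous_of_finiteDimensional M).norm

section Chain
variable {T Lz : ℝ} {K : ℕ} {μ : ℝ → Arg n m d → (Fin n → ℝ)} {σ : ℝ → Arg n m d → Sig n d}
  {f : ℝ → Arg n m d → Tens n m 0} {φ : (i : ℕ) → PhiFun n m d i}

lemma phi_aff {k : ℕ} (hchain : IsPhiChain n m d k T Lz μ σ f φ) (hk : K + 1 ≤ k)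
    {t : ℝ} (ht : t ∈ Set.Icc (0:ℝ) T) (hB : 1 ≤ K ∨ ∀ p ζ, sz σ t p ζ = 0)
    (x : Fin n → ℝ) (Y : (j : Fin (K + 2)) → Tens n m j) (Z : (j : Fin (K + 2)) → TensZ n m d j)
    (hY : Lz * opN (Y ⟨1, by omega⟩) < 1) :
    IsAff (fun w : TensZ n m d (K + 1) =>
      φ (K + 1) t (x, Y, Function.update Z (Fin.last (K + 1)) w)) := by
  have key : ∀ w : TensZ n m d (K + 1),
      φ (K + 1) t (x, Y, Function.update Z (Fin.last (K + 1)) w) =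
      phiStep μ σ t (fderiv ℝ (φ K t) (x, fun j => Y j.castSucc, fun j => Z j.castSucc)) x Y
        (Function.update Z (Fin.last (K + 1)) w) := by
    intro w
    obtain ⟨D, hD, h⟩ := hchain.step K hk t ht x Y (Function.update Z (Fin.last (K + 1)) w) hY
    have e : (fun j : Fin (K + 1) => Function.update Z (Fin.last (K + 1)) w j.castSucc) =
        fun j : Fin (K + 1) => Z j.castSucc := by
      funext j
      exact Function.update_of_ne (Fin.castSucc_lt_last j).ne _ _
    rw [e] at hD
    rw [h, hD.fderiv]
  simp only [key]
  exact phiStep_aff μ σ t _ x Y Z hB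

lemma add_single_eq (p : EE n m d K) (w : TensZ n m d K) :
    p + ((0, 0, Pi.single (Fin.last K) w) : EE n m d K) =
      (p.1, p.2.1, Function.update p.2.2 (Fin.last K)
        (p.2.2 (Fin.last K) + (show TensZ n m d (Fin.last K) from w))) := by
  refine Prod.ext (by simp) (Prod.ext (by simp) ?_)
  funext j
  by_cases h : j = Fin.last K
  · subst h
    simp
  · simp [h]

lemma phi_aff' {k : ℕ} (hchain : IsPhiChain n m d k T Lz μ σ f φ) (hk : K + 1 ≤ k)
    {t : ℝ} (ht : t ∈ Set.Icc (0:ℝ) T) (hB : 1 ≤ K ∨ ∀ p ζ, sz σ t p ζ = 0)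
    (p : EE n m d (K + 1)) (hY : Lz * opN (p.2.1 ⟨1, by omega⟩) < 1) :
    IsAff (fun w : TensZ n m d (K + 1) =>
      φ (K + 1) t (p + ((0, 0, Pi.single (Fin.last (K + 1)) w) : EE n m d (K + 1)))) := by
  simp only [add_single_eq]
  have h := phi_aff hchain hk ht hB p.1 p.2.1 p.2.2 hY
  have h2 : IsAff (fun w : TensZ n m d (K + 1) =>
      ((p.2.2 (Fin.last (K + 1)) + (show TensZ n m d (Fin.last (K + 1)) from w) :
        TensZ n m d (Fin.last (K + 1))))) := IsAff.add (IsAff.const _) IsAff.id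
  intro s a b
  have h3 := h2 s a b
  have h4 := h s (p.2.2 (Fin.last (K + 1)) + (show TensZ n m d (Fin.last (K + 1)) from a))
    (p.2.2 (Fin.last (K + 1)) + (show TensZ n m d (Fin.last (K + 1)) from b))
  refine Eq.trans ?_ h4
  exact congrArg (fun v => φ (K + 1) t (p.1, p.2.1,
    Function.update p.2.2 (Fin.last (K + 1)) v)) h3

lemma phi_diffAt (hchain : IsPhiChain n m d (K + 2) T Lz μ σ f φ)
    {t : ℝ} (ht : t ∈ Set.Icc (0:ℝ) T)
    (p : EE n m d (K + 1)) (hY : Lz * opN (p.2.1 ⟨1, by omega⟩) < 1) :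
    DifferentiableAt ℝ (φ (K + 1) t) p := by
  obtain ⟨D, hD, -⟩ := hchain.step (K + 1) le_rfl t ht p.1
    (Fin.snoc (α := fun j : Fin (K + 3) => Tens n m j) p.2.1 (0 : Tens n m (K + 2)))
    (Fin.snoc (α := fun j : Fin (K + 3) => TensZ n m d j) p.2.2 (0 : TensZ n m d (K + 2)))
    (by
      have e := Fin.snoc_castSucc (α := fun j : Fin (K + 3) => Tens n m j)
        (0 : Tens n m (K + 2)) p.2.1 ⟨1, by omega⟩
      exact lt_of_eq_of_lt (congrArg (fun v : Tens n m 1 => Lz * opN v) e) hY)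
  simp only [Fin.snoc_castSucc] at hD
  exact hD.differentiableAt

lemma D_aff (hchain : IsPhiChain n m d (K + 2) T Lz μ σ f φ)
    {t : ℝ} (ht : t ∈ Set.Icc (0:ℝ) T) (hB : 1 ≤ K ∨ ∀ p ζ, sz σ t p ζ = 0)
    (p : EE n m d (K + 1)) (hY : Lz * opN (p.2.1 ⟨1, by omega⟩) < 1) :
    IsAff (fun w : TensZ n m d (K + 1) => fderiv ℝ (φ (K + 1) t)
      (p + ((0, 0, Pi.single (Fin.last (K + 1)) w) : EE n m d (K + 1)))) := by
  intro s a b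
  have hd : ∀ w : TensZ n m d (K + 1), DifferentiableAt ℝ (fun q => φ (K + 1) t
      (q + ((0, 0, Pi.single (Fin.last (K + 1)) w) : EE n m d (K + 1)))) p := by
    intro w
    have h1 : DifferentiableAt ℝ (φ (K + 1) t)
        (p + ((0, 0, Pi.single (Fin.last (K + 1)) w) : EE n m d (K + 1))) := by
      apply phi_diffAt hchain ht
      rw [add_single_eq]
      exact hY
    exact (differentiableAt_comp_add_right _).2 h1
  simp only [← fderiv_comp_add_right]
  rw [← fderiv_const_smul (hd a), ← fderiv_const_smul (hd b),
    ← fderiv_add ((hd a).const_smul _) ((hd b).const_smul _)]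
  apply Filter.EventuallyEq.fderiv_eq
  have hc : Continuous (fun q : EE n m d (K + 1) => Lz * opN (q.2.1 ⟨1, by omega⟩)) :=
    continuous_const.mul (continuous_opN.comp
      ((continuous_apply (⟨1, by omega⟩ : Fin (K + 2))).comp (continuous_fst.comp continuous_snd)))
  have hev := hc.continuousAt.eventually_lt (continuousAt_const (y := (1:ℝ))) hY
  filter_upwards [hev] with q hq
  exact phi_aff' hchain (by omega) ht hB q hq s a b

end Chain

lemma appZ_add_Dzp {i : ℕ} (D : EE n m d i →L[ℝ] Tens n m i) (j : Fin (i + 1))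
    (z z' : TensZ n m d (j + 1)) :
    appZ (Dzp D j) (z + z') = appZ (Dzp D j) z + appZ (Dzp D j) z' := by
  funext e c
  have hv : ((0, 0, Pi.single j (fun a' b' c' =>
        (z + z') a' b' (Fin.snoc c' (c (Fin.last i))))) : EE n m d i) =
      ((0, 0, Pi.single j (fun a' b' c' =>
        z a' b' (Fin.snoc c' (c (Fin.last i))))) : EE n m d i) +
      ((0, 0, Pi.single j (fun a' b' c' =>
        z' a' b' (Fin.snoc c' (c (Fin.last i))))) : EE n m d i) := by
    simp only [Prod.mk_add_mk, add_zero, ← Pi.single_add]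
    rfl
  have h2 := congrArg D hv
  rw [map_add] at h2
  exact congrFun (congrFun h2 e) (Fin.init c)

lemma mulRight_zero {k : ℕ} (A : Fin n → Fin n → ℝ) :
    mulRight (fun (_ : Fin m) (_ : Fin (k + 1) → Fin n) => (0:ℝ)) A = 0 := by
  funext a c
  simp [mulRight]

lemma aux_zero (K : ℕ) : 0 < K + 3 := by omega

lemma aux_one (K : ℕ) : 1 < K + 3 := by omega

lemma aux_K (K : ℕ) : K + 1 < K + 3 := by omega

lemma phiStep_last {I : ℕ} (μ : ℝ → Arg n m d → (Fin n → ℝ))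
    (σ : ℝ → Arg n m d → Sig n d) (t : ℝ) (D : EE n m d (I + 1) →L[ℝ] Tens n m (I + 1))
    (x : Fin n → ℝ) (Y : (j : Fin (I + 3)) → Tens n m j)
    (Z : (j : Fin (I + 3)) → TensZ n m d j) :
    phiStep μ σ t D x Y Z =
      phiStep μ σ t D x Y (Function.update Z (Fin.last (I + 2)) (0 : TensZ n m d (I + 2)))
      + (appZ (Dzp D (Fin.last (I + 1))) (Z (Fin.last (I + 2)))
        - ∑ b : Fin d, mulRight (fun a c => Z (Fin.last (I + 2)) a b c)
          (Bmat σ t (x, Y ⟨0, aux_zero I⟩, Z ⟨0, aux_zero I⟩)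
            (Y ⟨1, aux_one I⟩) (Z ⟨1, aux_one I⟩) b)) := by
  unfold phiStep
  have h0 : Function.update Z (Fin.last (I + 2)) (0 : TensZ n m d (I + 2)) ⟨0, aux_zero I⟩
      = Z ⟨0, aux_zero I⟩ := Function.update_of_ne (by simp [Fin.ext_iff]) _ _
  have h1 : Function.update Z (Fin.last (I + 2)) (0 : TensZ n m d (I + 2)) ⟨1, aux_one I⟩
      = Z ⟨1, aux_one I⟩ := Function.update_of_ne (by simp [Fin.ext_iff]) _ _
  have h2 : ∀ j : Fin (I + 1),
      Function.update Z (Fin.last (I + 2)) (0 : TensZ n m d (I + 2)) j.castSucc.succ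
      = Z j.castSucc.succ := fun j =>
        Function.update_of_ne (by have := j.2; simp [Fin.ext_iff]; omega) _ _
  have h3 : Function.update Z (Fin.last (I + 2)) (0 : TensZ n m d (I + 2)) (Fin.last (I + 2))
      = (0 : TensZ n m d (I + 2)) := Function.update_self _ _ _
  have h4 : Function.update Z (Fin.last (I + 2)) (0 : TensZ n m d (I + 2)) (Fin.last (I + 1)).succ
      = (0 : TensZ n m d (I + 2)) := Function.update_self _ _ _
  rw [Fin.sum_univ_castSucc (n := I + 1), Fin.sum_univ_castSucc (n := I + 1)]
  simp only [h0, h1, h2]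
  have hA : ∀ z : TensZ n m d (I + 2), hGen σ t (x, Y ⟨0, aux_zero I⟩, Z ⟨0, aux_zero I⟩)
      (Y ⟨1, aux_one I⟩) (Z ⟨1, aux_one I⟩) (k := I + 1) (Y (Fin.last (I + 1)).succ) z =
      z + hGen σ t (x, Y ⟨0, aux_zero I⟩, Z ⟨0, aux_zero I⟩)
      (Y ⟨1, aux_one I⟩) (Z ⟨1, aux_one I⟩) (k := I + 1) (Y (Fin.last (I + 1)).succ) 0 := by
    intro z
    funext a b c
    simp [hGen, hK]
  have hA1 : appZ (Dzp D (Fin.last (I + 1))) (hGen σ t (x, Y ⟨0, aux_zero I⟩, Z ⟨0, aux_zero I⟩)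
      (Y ⟨1, aux_one I⟩) (Z ⟨1, aux_one I⟩) (Y (Fin.last (I + 1)).succ) (Z (Fin.last (I + 1)).succ))
      = appZ (Dzp D (Fin.last (I + 1))) (Z (Fin.last (I + 2))) +
        appZ (Dzp D (Fin.last (I + 1))) (hGen σ t (x, Y ⟨0, aux_zero I⟩, Z ⟨0, aux_zero I⟩)
      (Y ⟨1, aux_one I⟩) (Z ⟨1, aux_one I⟩) (Y (Fin.last (I + 1)).succ)
        (Function.update Z (Fin.last (I + 2)) (0 : TensZ n m d (I + 2))
          (Fin.last (I + 1)).succ)) := by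
    rw [h4]
    rw [← appZ_add_Dzp]
    congr 1
    exact hA _
  rw [hA1]
  have hS : ∑ b : Fin d, mulRight (fun a c =>
      Function.update Z (Fin.last (I + 2)) (0 : TensZ n m d (I + 2)) (Fin.last (I + 2)) a b c)
          (Bmat σ t (x, Y ⟨0, aux_zero I⟩, Z ⟨0, aux_zero I⟩)
            (Y ⟨1, aux_one I⟩) (Z ⟨1, aux_one I⟩) b) = 0 := by
    rw [h3]
    exact Finset.sum_eq_zero fun b _ => mulRight_zero _
  have h5 : Function.update Z (Fin.last (I + 2)) (0 : TensZ n m d (I + 2)) (Fin.last (I + 1 + 1))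
      = (0 : TensZ n m d (I + 2)) := h3
  erw [hS]
  abel

/-- Everything at a fixed point. -/
lemma phi_main {T Lz : ℝ} {K : ℕ} {μ : ℝ → Arg n m d → (Fin n → ℝ)}
    {σ : ℝ → Arg n m d → Sig n d}
    {f : ℝ → Arg n m d → Tens n m 0} {φ : (i : ℕ) → PhiFun n m d i}
    (hchain : IsPhiChain n m d (K + 2) T Lz μ σ f φ)
    {t : ℝ} (ht : t ∈ Set.Icc (0:ℝ) T) (hB : 1 ≤ K ∨ ∀ p ζ, sz σ t p ζ = 0)
    (x : Fin n → ℝ) (Y : (j : Fin (K + 3)) → Tens n m j) (Z : (j : Fin (K + 3)) → TensZ n m d j)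
    (hY : Lz * opN (Y ⟨1, aux_one K⟩) < 1) :
    Differentiable ℝ (fun w : TensZ n m d (K + 1) =>
      φ (K + 2) t (x, Y, Function.update Z ⟨K + 1, aux_K K⟩ w)) ∧
    ∃ C, ∀ w : TensZ n m d (K + 1),
      φ (K + 2) t (x, Y, Function.update Z ⟨K + 1, aux_K K⟩ w) =
      φ (K + 2) t (x, Y, Function.update
        (Function.update Z (Fin.last (K + 2)) (0 : TensZ n m d (K + 2))) ⟨K + 1, aux_K K⟩ w)
      + C := by
  set q : Fin (K + 3) := ⟨K + 1, aux_K K⟩ with hqd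
  let p0 : EE n m d (K + 1) := (x, fun j => Y j.castSucc,
    Function.update (fun j : Fin (K + 2) => Z j.castSucc) (Fin.last (K + 1))
      (0 : TensZ n m d (K + 1)))
  let Dw : TensZ n m d (K + 1) → EE n m d (K + 1) →L[ℝ] Tens n m (K + 1) := fun w =>
    fderiv ℝ (φ (K + 1) t)
      (p0 + ((0, 0, Pi.single (Fin.last (K + 1)) w) : EE n m d (K + 1)))
  have hDa : IsAff Dw := D_aff hchain ht hB p0 hY
  have hFa := phi_aff' hchain (by omega : K + 1 ≤ K + 2) ht hB p0 hY
  -- the step formula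
  have hstep : ∀ (w : TensZ n m d (K + 1)) (z : TensZ n m d (K + 2)),
      φ (K + 2) t (x, Y, Function.update (Function.update Z (Fin.last (K + 2)) z) q w) =
      phiStep μ σ t (Dw w) x Y (Function.update (Function.update Z (Fin.last (K + 2)) z) q w) := by
    intro w z
    obtain ⟨D, hD, h⟩ := hchain.step (K + 1) le_rfl t ht x Y
      (Function.update (Function.update Z (Fin.last (K + 2)) z) q w) hY
    have e : ((x, fun j : Fin (K + 2) => Y j.castSucc, fun j : Fin (K + 2) => Function.update
        (Function.update Z (Fin.last (K + 2)) z) q w j.castSucc) : EE n m d (K + 1)) =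
        p0 + ((0, 0, Pi.single (Fin.last (K + 1)) w) : EE n m d (K + 1)) := by
      rw [add_single_eq]
      refine Prod.ext rfl (Prod.ext rfl ?_)
      funext j
      by_cases hj : j = Fin.last (K + 1)
      · subst hj
        have : (Fin.last (K + 1)).castSucc = q := rfl
        simp [p0]
        exact Function.update_self (β := fun j : Fin (K + 3) => TensZ n m d j) q w _
      · have hj' : j.castSucc ≠ q := by
          intro h
          apply hj
          exact Fin.castSucc_injective _ h
        simp only [p0]
        rw [Function.update_of_ne hj', Function.update_of_ne (Fin.castSucc_lt_last j).ne,
          Function.update_of_ne hj, Function.update_of_ne hj]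
    rw [e] at hD
    rw [h, ← hD.fderiv]
  have hZ : Function.update Z (Fin.last (K + 2)) (Z (Fin.last (K + 2))) = Z :=
    Function.update_eq_self _ _
  have hq0 : q ≠ ⟨0, aux_zero K⟩ := by simp [hqd, Fin.ext_iff]
  have hql : q ≠ Fin.last (K + 2) := by simp [hqd, Fin.ext_iff]
  have hstep' : ∀ w : TensZ n m d (K + 1),
      φ (K + 2) t (x, Y, Function.update Z q w) =
      phiStep μ σ t (Dw w) x Y (Function.update Z q w) := by
    intro w
    have := hstep w (Z (Fin.last (K + 2)))
    rwa [hZ] at this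
  constructor
  · rw [show (fun w : TensZ n m d (K + 1) => φ (K + 2) t (x, Y, Function.update Z q w)) = _
      from funext hstep']
    exact phiStep_diff (i := K + 1) μ σ t x Y Z q hq0 hql Dw hDa.differentiable
  · refine ⟨appZ (fun v : TensZ n m d (K + 1) =>
        φ (K + 1) t (p0 + ((0, 0, Pi.single (Fin.last (K + 1)) v) : EE n m d (K + 1)))
        - φ (K + 1) t (p0 + ((0, 0, Pi.single (Fin.last (K + 1)) 0) : EE n m d (K + 1))))
        (Z (Fin.last (K + 2)))
        - ∑ b : Fin d, mulRight (fun a c => Z (Fin.last (K + 2)) a b c)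
          (Bmat σ t (x, Y ⟨0, aux_zero K⟩, Z ⟨0, aux_zero K⟩)
            (Y ⟨1, aux_one K⟩) (Z ⟨1, aux_one K⟩) b), fun w => ?_⟩
    rw [hstep', hstep, phiStep_last, Function.update_comm hql]
    have e1 : Dzp (Dw w) (Fin.last (K + 1)) = (fun v : TensZ n m d (K + 1) =>
        φ (K + 1) t (p0 + ((0, 0, Pi.single (Fin.last (K + 1)) v) : EE n m d (K + 1)))
        - φ (K + 1) t (p0 + ((0, 0, Pi.single (Fin.last (K + 1)) 0) : EE n m d (K + 1)))) := by
      funext v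
      let S : TensZ n m d (K + 1) →L[ℝ] EE n m d (K + 1) :=
        (ContinuousLinearMap.inr ℝ _ _).comp ((ContinuousLinearMap.inr ℝ _ _).comp
          (ContinuousLinearMap.single ℝ (fun j : Fin (K + 2) => TensZ n m d j) (Fin.last (K + 1))))
      have hS : ∀ v, S v = ((0, 0, Pi.single (Fin.last (K + 1)) v) : EE n m d (K + 1)) :=
        fun v => rfl
      have hd : DifferentiableAt ℝ (φ (K + 1) t) (p0 + S w) := by
        apply phi_diffAt hchain ht
        rw [hS, add_single_eq]
        exact hY
      have h := HasFDerivAt.comp w hd.hasFDerivAt (S.hasFDerivAt.const_add p0)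
      exact hFa.deriv_apply h v
    have e2 : Function.update Z q w (Fin.last (K + 2)) = Z (Fin.last (K + 2)) :=
      Function.update_of_ne hql.symm _ _
    have e3 : Function.update Z q w ⟨0, aux_zero K⟩ = Z ⟨0, aux_zero K⟩ :=
      Function.update_of_ne hq0.symm _ _
    have e4 : ∀ b, Bmat σ t (x, Y ⟨0, aux_zero K⟩, Z ⟨0, aux_zero K⟩)
            (Y ⟨1, aux_one K⟩) (Function.update Z q w ⟨1, aux_one K⟩) b =
          Bmat σ t (x, Y ⟨0, aux_zero K⟩, Z ⟨0, aux_zero K⟩)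
            (Y ⟨1, aux_one K⟩) (Z ⟨1, aux_one K⟩) b := by
      intro b
      rcases hB with h | h
      · rw [Function.update_of_ne]
        simp [hqd, Fin.ext_iff]; omega
      · exact Bmat_indep (h _) _ _ _
    rw [e2, e3, e1]
    simp only [e4]

/-- **Lemma 6.3.**  Assume `(μ,σ,f)` satisfies `(k-MLLC)` with `k = K + 2 ≥ 3` (or
`k = K + 2 ≥ 2` if `L_{σ,z} = 0`).  Then the partial derivative `φ⁽ᵏ⁾_{z⁽ᵏ⁻¹⁾}` can
be expressed as a function of `θ_{k−} = (θ_{k−1}, y⁽ᵏ⁾)` only: there exists a function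
`g` on `Θ_{k−1} × ℝ^{m×_k n}`, with values in the linear maps
`ℝ^{(m×d)×_{k−1} n} → ℝ^{m×_k n}`, such that at every `θ_k ∈ Θ_k` the derivative of
`φ⁽ᵏ⁾` with respect to `z⁽ᵏ⁻¹⁾` equals `g(θ_{k−})`; in particular this derivative does
not depend on `z⁽ᵏ⁾`. -/
theorem phi_deriv_zk_minus_one_function_of_theta_k_minus
    {n m d : ℕ} {T : ℝ} (hT : 0 < T) (K : ℕ)
    (μ : ℝ → Arg n m d → (Fin n → ℝ)) (σ : ℝ → Arg n m d → Sig n d)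
    (f : ℝ → Arg n m d → Tens n m 0) (Lz : ℝ)
    (hMLLC : MLLC n m d (K + 2) T μ σ f Lz)
    (hcase : 1 ≤ K ∨ Lz = 0)
    (φ : (i : ℕ) → PhiFun n m d i)
    (hchain : IsPhiChain n m d (K + 2) T Lz μ σ f φ) :
    ∃ g : ℝ → (Fin n → ℝ) → ((j : Fin (K + 2)) → Tens n m j) →
        ((j : Fin (K + 2)) → TensZ n m d j) → Tens n m (K + 2) →
        (TensZ n m d (K + 1) →L[ℝ] Tens n m (K + 2)),
      ∀ t ∈ Set.Icc (0:ℝ) T, ∀ (x : Fin n → ℝ)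
        (Y : (j : Fin (K + 3)) → Tens n m j) (Z : (j : Fin (K + 3)) → TensZ n m d j),
        Lz * opN (Y ⟨1, by omega⟩) < 1 →
        HasFDerivAt
          (fun w : TensZ n m d (K + 1) =>
            φ (K + 2) t (x, Y, Function.update Z ⟨K + 1, by omega⟩ w))
          (g t x (fun j : Fin (K + 2) => Y j.castSucc)
            (fun j : Fin (K + 2) => Z j.castSucc) (Y (Fin.last (K + 2))))
          (Z ⟨K + 1, by omega⟩) := by
  have hB : ∀ t ∈ Set.Icc (0:ℝ) T, 1 ≤ K ∨ ∀ p ζ, sz σ t p ζ = 0 := by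
    intro t ht
    rcases hcase with h | h
    · exact Or.inl h
    · subst h
      exact Or.inr fun p ζ => sz_zero hMLLC ht p ζ
  refine ⟨fun t x Y' Z' yk => fderiv ℝ (fun w : TensZ n m d (K + 1) =>
    φ (K + 2) t (x, Fin.snoc (α := fun j : Fin (K + 3) => Tens n m j) Y' yk,
      Function.update (Fin.snoc (α := fun j : Fin (K + 3) => TensZ n m d j) Z'
        (0 : TensZ n m d (K + 2))) ⟨K + 1, by omega⟩ w)) (Z' (Fin.last (K + 1))), ?_⟩
  intro t ht x Y Z hY
  obtain ⟨hd, C, hC⟩ := phi_main hchain ht (hB t ht) x Y Z hY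
  have eY : Fin.snoc (α := fun j : Fin (K + 3) => Tens n m j)
      (fun j : Fin (K + 2) => Y j.castSucc) (Y (Fin.last (K + 2))) = Y := Fin.snoc_init_self Y
  have eZ : Fin.snoc (α := fun j : Fin (K + 3) => TensZ n m d j)
      (fun j : Fin (K + 2) => Z j.castSucc) (0 : TensZ n m d (K + 2)) =
      Function.update Z (Fin.last (K + 2)) (0 : TensZ n m d (K + 2)) := by
    funext j
    refine Fin.lastCases ?_ (fun j => ?_) j
    · rw [Fin.snoc_last, Function.update_self]
    · rw [Fin.snoc_castSucc, Function.update_of_ne (Fin.castSucc_lt_last j).ne]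
  simp only [eY, eZ]
  have h1 := (hd (Z ⟨K + 1, by omega⟩)).hasFDerivAt
  have h2 : fderiv ℝ (fun w : TensZ n m d (K + 1) =>
      φ (K + 2) t (x, Y, Function.update Z ⟨K + 1, by omega⟩ w)) (Z ⟨K + 1, by omega⟩) =
      fderiv ℝ (fun w : TensZ n m d (K + 1) => φ (K + 2) t (x, Y, Function.update
        (Function.update Z (Fin.last (K + 2)) (0 : TensZ n m d (K + 2))) ⟨K + 1, by omega⟩ w))
        (Z ⟨K + 1, by omega⟩) := by
    rw [funext hC, fderiv_add_const]
  rw [h2] at h1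
  exact h1

end DecouplingFBSDE
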